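/- (Krein's formula, matrix case) Suppose for every ξ ∈ (a,b] the truncated equations g(t,ξ) − ∫_a^ξ K(t,s)g(s,ξ)ds = I and g*(t,ξ) − ∫_a^ξ g*(s,ξ)K(s,t)ds = I have unique continuous solutions, and det[g*(ξ,ξ)g(ξ,ξ)] ≠ 0 for a ≤ ξ ≤ b. Set M'(ξ) = g*(ξ,ξ)g(ξ,ξ). Then for every continuous vector function f on [a,b], the unique solution φ of φ(t) − ∫_a^b K(t,s)φ(s) ds = f(t) is given by φ(t) = g(t,b)[M'(b)]⁻¹ [d/dξ ∫_a^ξ g*(s,ξ)f(s)ds]_{ξ=b} − ∫_t^b g(t,ξ) d/dξ { [M'(ξ)]⁻¹ d/dξ ∫_a^ξ g*(s,ξ)f(s)ds } dξ. -/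

import Mathlib

open Matrix intervalIntegral Set

attribute [local instance] Matrix.normedAddCommGroup Matrix.normedSpace

/-!
A solution of the homogeneous truncated equation can be added to every column of `g`, so uniqueness
of `g` makes the truncated operators injective, and invertible by the Fredholm alternative.

Let `u_ξ` solve the equation truncated at `ξ` with right-hand side `f`. Duality with `g*` gives
`∫_a^ξ u_ξ = ∫_a^ξ g*(s, ξ) f(s) ds`, and differentiating in `ξ` yields
`D(ξ) = g*(ξ, ξ) u_ξ(ξ)`. Hence, with `c = M'⁻¹ D`, the function `q_ξ = u_ξ - g(·, ξ) c(ξ)`,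
which solves the truncated equation with right-hand side `f - c(ξ)`, vanishes at `ξ`. Moving the
endpoint of the integral therefore contributes nothing to `∂q_ξ/∂ξ`, leaving
`∂q_ξ/∂ξ = -g(·, ξ) c'(ξ)`; now integrate from `ξ = t`, where `q_t(t) = 0`, to `ξ = b`.
-/

section StrongIntegral

open Filter Topology Asymptotics

variable {X Y : Type*} [NormedAddCommGroup X] [NormedSpace ℝ X]
  [NormedAddCommGroup Y] [NormedSpace ℝ Y] {A : ℝ → X →L[ℝ] Y}

lemma exists_forall_opNorm_le_of_isCompact [CompleteSpace X] (hA : ∀ v, Continuous fun s => A s v)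
    {S : Set ℝ} (hS : IsCompact S) : ∃ C, ∀ s ∈ S, ‖A s‖ ≤ C := by
  obtain ⟨C, hC⟩ := banach_steinhaus (g := fun s : S => A s) fun v =>
    (hS.exists_bound_of_continuousOn (hA v).continuousOn).imp fun _ h s => h s s.2
  exact ⟨C, fun s hs => hC ⟨s, hs⟩⟩

lemma norm_integral_clm_apply_le {a η C : ℝ} (hC : ∀ s ∈ uIoc a η, ‖A s‖ ≤ C) (v : X) :
    ‖∫ s in a..η, A s v‖ ≤ C * |η - a| * ‖v‖ := by
  rw [mul_right_comm]
  exact norm_integral_le_of_norm_le_const fun s hs => (A s).le_of_opNorm_le (hC s hs) v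

variable [CompleteSpace X]

/-- The strong (pointwise) integral `v ↦ ∫ s in a..η, A s v` of a strongly continuous family of
operators. Evaluation at a point `s` is strongly but not norm continuous in `s`, so the Bochner
integral of `A` in `X →L[ℝ] Y` is not available in the application. -/
noncomputable def strongIntegral (hA : ∀ v, Continuous fun s => A s v) (a η : ℝ) : X →L[ℝ] Y :=
  LinearMap.mkContinuousOfExistsBound
    { toFun v := ∫ s in a..η, A s v
      map_add' v w := by
        simp only [map_add]
        exact integral_add ((hA v).intervalIntegrable _ _) ((hA w).intervalIntegrable _ _)
      map_smul' c v := by simp only [map_smul, integral_smul, RingHom.id_apply] }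
    (by
      obtain ⟨C, hC⟩ := exists_forall_opNorm_le_of_isCompact hA isCompact_uIcc
      exact ⟨C * |η - a|, norm_integral_clm_apply_le fun s hs => hC s (uIoc_subset_uIcc hs)⟩)

variable (hA : ∀ v, Continuous fun s => A s v)

lemma strongIntegral_apply (a η : ℝ) (v : X) : strongIntegral hA a η v = ∫ s in a..η, A s v := rfl

lemma strongIntegral_sub (a ξ η : ℝ) :
    strongIntegral hA a η - strongIntegral hA a ξ = strongIntegral hA ξ η :=
  ContinuousLinearMap.ext fun v => integral_interval_sub_left
    ((hA v).intervalIntegrable _ _) ((hA v).intervalIntegrable _ _)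

lemma strongIntegral_isBigO (ξ : ℝ) : strongIntegral hA ξ =O[𝓝 ξ] fun η => η - ξ := by
  obtain ⟨C, hC⟩ :=
    exists_forall_opNorm_le_of_isCompact hA (isCompact_Icc (a := ξ - 1) (b := ξ + 1))
  have hξ : Icc (ξ - 1) (ξ + 1) ∈ 𝓝 ξ := Icc_mem_nhds (by linarith) (by linarith)
  have hC0 : 0 ≤ C := (norm_nonneg _).trans (hC ξ (mem_of_mem_nhds hξ))
  refine IsBigO.of_bound C ?_
  filter_upwards [hξ] with η hη
  refine ContinuousLinearMap.opNorm_le_bound _ (by positivity) fun v => ?_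
  refine norm_integral_clm_apply_le (fun s hs => hC s ?_) v
  exact ordConnected_Icc.uIcc_subset (mem_of_mem_nhds hξ) hη (uIoc_subset_uIcc hs)

lemma continuous_strongIntegral (a : ℝ) : Continuous (strongIntegral hA a) := by
  refine continuous_iff_continuousAt.2 fun ξ => tendsto_sub_nhds_zero_iff.1 ?_
  simp only [strongIntegral_sub]
  refine (strongIntegral_isBigO hA ξ).trans_tendsto ?_
  exact tendsto_sub_nhds_zero_iff.2 tendsto_id

-- Replacing `w η` by the fixed vector `w ξ` changes the integral by `O(η - ξ) * o(1)`.
lemma hasDerivAt_strongIntegral_apply [CompleteSpace Y] {ξ : ℝ} {w : ℝ → X}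
    (hw : ContinuousAt w ξ) : HasDerivAt (fun η => strongIntegral hA ξ η (w η)) (A ξ (w ξ)) ξ := by
  have hfixed : HasDerivAt (fun η => strongIntegral hA ξ η (w ξ)) (A ξ (w ξ)) ξ :=
    integral_hasDerivAt_right ((hA _).intervalIntegrable _ _)
      ((hA _).stronglyMeasurableAtFilter _ _) (hA _).continuousAt
  have hmoving : HasDerivAt (fun η => strongIntegral hA ξ η (w η - w ξ)) 0 ξ := by
    rw [hasDerivAt_iff_isLittleO]
    have hw0 : (fun η => w η - w ξ) =o[𝓝 ξ] fun _ => (1 : ℝ) :=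
      (isLittleO_one_iff ℝ).2 (tendsto_sub_nhds_zero_iff.2 hw)
    have hle : (fun η => strongIntegral hA ξ η (w η - w ξ)) =O[𝓝 ξ]
        fun η => ‖strongIntegral hA ξ η‖ * ‖w η - w ξ‖ :=
      .of_norm_le fun η => (strongIntegral hA ξ η).le_opNorm _
    simpa using hle.trans_isLittleO
      ((strongIntegral_isBigO hA ξ).norm_left.mul_isLittleO hw0.norm_left)
  simpa [Function.comp_def, Pi.add_def] using hfixed.add hmoving

lemma hasDerivAt_strongIntegral_apply_of_hasDerivAt [CompleteSpace Y] (a : ℝ) {ξ : ℝ}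
    {w : ℝ → X} {w' : X} (hw : HasDerivAt w w' ξ) :
    HasDerivAt (fun η => strongIntegral hA a η (w η)) (A ξ (w ξ) + strongIntegral hA a ξ w') ξ := by
  refine ((hasDerivAt_strongIntegral_apply hA hw.continuousAt).add
    ((strongIntegral hA a ξ).hasFDerivAt.comp_hasDerivAt ξ hw)).congr_of_eventuallyEq ?_
  refine .of_forall fun η => ?_
  simp [← strongIntegral_sub hA a ξ η]

end StrongIntegral

section Resolvent

open Topology

variable {X : Type*} [NormedAddCommGroup X] [NormedSpace ℝ X]

lemma inverse_one_sub_apply_sub {T : X →L[ℝ] X} (hT : IsUnit (1 - T)) (y : X) :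
    Ring.inverse (1 - T) y - T (Ring.inverse (1 - T) y) = y := by
  simpa using DFunLike.congr_fun (Ring.mul_inverse_cancel _ hT) y

lemma inverse_one_sub_apply_eq {T : X →L[ℝ] X} (hT : IsUnit (1 - T)) {u y : X}
    (h : u - T u = y) : Ring.inverse (1 - T) y = u := by
  rw [← h]
  simpa using DFunLike.congr_fun (Ring.inverse_mul_cancel _ hT) u

variable [CompleteSpace X] {A : ℝ → X →L[ℝ] X} (hA : ∀ v, Continuous fun s => A s v) {a ξ : ℝ}

lemma continuousAt_inverse_one_sub_strongIntegral (hξ : IsUnit (1 - strongIntegral hA a ξ)) :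
    ContinuousAt (fun η => Ring.inverse (1 - strongIntegral hA a η)) ξ := by
  have hinv := NormedRing.inverse_continuousAt hξ.unit
  exact ContinuousAt.comp (f := fun η => 1 - strongIntegral hA a η) hinv
    (continuous_const.sub (continuous_strongIntegral hA a)).continuousAt

lemma hasDerivAt_inverse_one_sub_strongIntegral (hξ : IsUnit (1 - strongIntegral hA a ξ))
    {y : ℝ → X} {y' : X} (hy : HasDerivAt y y' ξ) :
    HasDerivAt (fun η => Ring.inverse (1 - strongIntegral hA a η) (y η))
      (Ring.inverse (1 - strongIntegral hA a ξ)
        (A ξ (Ring.inverse (1 - strongIntegral hA a ξ) (y ξ)) + y')) ξ := by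
  set R := fun η => Ring.inverse (1 - strongIntegral hA a η)
  have hcont : ContinuousAt (fun η => R η (y η)) ξ :=
    (continuousAt_inverse_one_sub_strongIntegral hA hξ).clm_apply hy.continuousAt
  have hunit : ∀ᶠ η in 𝓝 ξ, IsUnit (1 - strongIntegral hA a η) :=
    (continuous_const.sub (continuous_strongIntegral hA a)).continuousAt.eventually_mem
      (Units.isOpen.mem_nhds hξ)
  refine ((R ξ).hasFDerivAt.comp_hasDerivAt ξ
    ((hasDerivAt_strongIntegral_apply hA hcont).add hy)).congr_of_eventuallyEq ?_
  filter_upwards [hunit] with η hη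
  refine (inverse_one_sub_apply_eq hξ ?_).symm
  have hRη : R η (y η) - strongIntegral hA a η (R η (y η)) = y η :=
    inverse_one_sub_apply_sub hη (y η)
  change R η (y η) - strongIntegral hA a ξ (R η (y η)) = strongIntegral hA ξ η (R η (y η)) + y η
  rw [← strongIntegral_sub hA a ξ η, _root_.sub_apply]
  generalize R η (y η) = z at hRη ⊢
  rw [← hRη]
  abel

end Resolvent

section Truncated

open MeasureTheory

variable {E : Type*} [NormedAddCommGroup E] [NormedSpace ℝ E] {a b ξ : ℝ}
  {K : ℝ → ℝ → E →L[ℝ] E}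

/-- The functions `K(·, s) x` on `[a, b]`, as a jointly continuous family in `(s, x)`. -/
noncomputable def kernelSection (a b : ℝ) (hK : Continuous fun p : ℝ × ℝ => K p.1 p.2) :
    C(ℝ × E, C(Icc a b, E)) :=
  ContinuousMap.curry
    ⟨fun p => K p.2 p.1.1 p.1.2,
      .clm_apply (hK.comp (g := fun p : ℝ × ℝ => K p.1 p.2)
        (f := fun p : (ℝ × E) × Icc a b => ((p.2 : ℝ), p.1.1)) (by fun_prop)) (by fun_prop)⟩

/-- The operator `v ↦ K(·, s) v(s)` on `C([a, b], E)`. Outside `[a, b]` the value `v(s)` is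
replaced by its value at the nearest endpoint. -/
noncomputable def kernelOperator (hab : a ≤ b) (hK : Continuous fun p : ℝ × ℝ => K p.1 p.2)
    (s : ℝ) : C(Icc a b, E) →L[ℝ] C(Icc a b, E) where
  toFun v := kernelSection a b hK (s, IccExtend hab v s)
  map_add' v w := by ext t; simp [kernelSection, IccExtend]
  map_smul' c v := by ext t; simp [kernelSection, IccExtend]
  cont := (kernelSection a b hK).continuous.comp
    (continuous_const.prodMk (continuous_eval_const _))

lemma kernelOperator_apply (hab : a ≤ b) (hK : Continuous fun p : ℝ × ℝ => K p.1 p.2) (s : ℝ)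
    (v : C(Icc a b, E)) (t : Icc a b) :
    kernelOperator hab hK s v t = K t s (IccExtend hab v s) := rfl

lemma continuous_kernelOperator_apply (hab : a ≤ b)
    (hK : Continuous fun p : ℝ × ℝ => K p.1 p.2) (v : C(Icc a b, E)) :
    Continuous fun s => kernelOperator hab hK s v :=
  (kernelSection a b hK).continuous.comp (continuous_id.prodMk v.continuous.Icc_extend')

lemma continuous_integral_right_clm_apply {g : ℝ → ℝ → E →L[ℝ] E}
    (hgcont : Continuous fun p : ℝ × ℝ => g p.1 p.2) {w : ℝ → E} (hw : Continuous w) (b : ℝ) :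
    Continuous fun t => ∫ ξ in t..b, g t ξ (w ξ) := by
  simp only [integral_symm b]
  exact (continuous_parametric_intervalIntegral_of_continuous
    (f := fun t ξ => g t ξ (w ξ)) (by fun_prop) continuous_id).neg

lemma integral_adjoint_apply_sub_integral [CompleteSpace E]
    (hK : Continuous fun p : ℝ × ℝ => K p.1 p.2) {G : ℝ → E →L[ℝ] E} (hGcont : Continuous G)
    (hG : ∀ s ∈ uIcc a ξ, G s - ∫ t in a..ξ, G t * K t s = 1) {u : ℝ → E} (hu : Continuous u) :
    ∫ t in a..ξ, G t (u t - ∫ s in a..ξ, K t s (u s)) = ∫ t in a..ξ, u t := by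
  have hGKu : Continuous fun p : ℝ × ℝ => G p.1 (K p.1 p.2 (u p.2)) := by fun_prop
  have hGu : IntervalIntegrable (fun t => G t (u t)) volume a ξ :=
    (hGcont.clm_apply hu).intervalIntegrable _ _
  have hswap : ∫ t in a..ξ, G t (∫ s in a..ξ, K t s (u s))
      = ∫ s in a..ξ, (∫ t in a..ξ, G t * K t s) (u s) := by
    calc ∫ t in a..ξ, G t (∫ s in a..ξ, K t s (u s))
      _ = ∫ t in a..ξ, ∫ s in a..ξ, G t (K t s (u s)) := by
        refine integral_congr fun t _ => ((G t).intervalIntegral_comp_comm ?_).symm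
        exact Continuous.intervalIntegrable (by fun_prop) _ _
      _ = ∫ s in a..ξ, ∫ t in a..ξ, G t (K t s (u s)) := by
        refine intervalIntegral_intervalIntegral_swap ?_
        exact (hGKu.continuousOn.integrableOn_compact (isCompact_uIcc.prod isCompact_uIcc)).mono_set
          (prod_mono uIoc_subset_uIcc uIoc_subset_uIcc)
      _ = ∫ s in a..ξ, (∫ t in a..ξ, G t * K t s) (u s) := by
        refine integral_congr fun s _ => (ContinuousLinearMap.intervalIntegral_apply
          (φ := fun t => G t * K t s) ?_ (u s)).symm
        exact Continuous.intervalIntegrable (by fun_prop) _ _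
  simp only [map_sub]
  rw [integral_sub hGu (Continuous.intervalIntegrable (by fun_prop) _ _), hswap,
    ← integral_sub hGu]
  · refine integral_congr fun s hs => ?_
    simp only [← _root_.sub_apply, hG s hs, one_apply_eq_self]
  · exact Continuous.intervalIntegrable (by fun_prop) _ _

variable [CompleteSpace E] (hab : a ≤ b) (hK : Continuous fun p : ℝ × ℝ => K p.1 p.2)

/-- The truncated integral operator `v ↦ ∫ s in a..ξ, K(·, s) v(s)` on `C([a, b], E)`. -/
noncomputable def truncatedOperator (ξ : ℝ) : C(Icc a b, E) →L[ℝ] C(Icc a b, E) :=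
  strongIntegral (continuous_kernelOperator_apply hab hK) a ξ

/-- The operator taking `y` to the solution of the truncated equation
`u(t) - ∫ s in a..ξ, K(t, s) u(s) = y(t)` on `[a, b]`, which is the zero operator unless
`1 - truncatedOperator hab hK ξ` is invertible. -/
noncomputable def truncatedResolvent (ξ : ℝ) : C(Icc a b, E) →L[ℝ] C(Icc a b, E) :=
  Ring.inverse (1 - truncatedOperator hab hK ξ)

lemma truncatedOperator_apply (v : C(Icc a b, E)) (t : Icc a b) :
    truncatedOperator hab hK ξ v t = ∫ s in a..ξ, K t s (IccExtend hab v s) :=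
  ((ContinuousMap.evalCLM ℝ t).intervalIntegral_comp_comm
    ((continuous_kernelOperator_apply hab hK v).intervalIntegrable _ _)).symm

lemma truncatedOperator_congr (hξ : ξ ∈ Icc a b) {v w : C(Icc a b, E)}
    (h : EqOn (IccExtend hab v) (IccExtend hab w) (Icc a ξ)) :
    truncatedOperator hab hK ξ v = truncatedOperator hab hK ξ w := by
  ext t
  simp only [truncatedOperator_apply]
  refine integral_congr fun s hs => ?_
  rw [uIcc_of_le hξ.1] at hs
  simp only [h hs]

variable {hK}

lemma truncatedResolvent_apply_sub_integral (hunit : IsUnit (1 - truncatedOperator hab hK ξ))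
    (y : C(Icc a b, E)) {t : ℝ} (ht : t ∈ Icc a b) :
    IccExtend hab (truncatedResolvent hab hK ξ y) t
      - ∫ s in a..ξ, K t s (IccExtend hab (truncatedResolvent hab hK ξ y) s)
      = IccExtend hab y t := by
  have h := DFunLike.congr_fun (inverse_one_sub_apply_sub hunit y) ⟨t, ht⟩
  rw [ContinuousMap.sub_apply, truncatedOperator_apply] at h
  simpa only [truncatedResolvent, IccExtend_of_mem hab _ ht] using h

lemma truncatedResolvent_eqOn (hξ : ξ ∈ Icc a b) (hunit : IsUnit (1 - truncatedOperator hab hK ξ))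
    {u : ℝ → E} (hu : Continuous u) {y : C(Icc a b, E)}
    (h : ∀ t ∈ Icc a ξ, u t - ∫ s in a..ξ, K t s (u s) = IccExtend hab y t) :
    EqOn (IccExtend hab (truncatedResolvent hab hK ξ y)) u (Icc a ξ) := by
  let r : C(Icc a b, E) := ⟨fun t => u t, by fun_prop⟩
  let v := y + truncatedOperator hab hK ξ r
  have hr {t : ℝ} (ht : t ∈ Icc a b) : IccExtend hab r t = u t := IccExtend_of_mem hab _ ht
  have hsub : Icc a ξ ⊆ Icc a b := Icc_subset_Icc_right hξ.2
  have hv : EqOn (IccExtend hab v) (IccExtend hab r) (Icc a ξ) := fun t ht => by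
    have hTr : truncatedOperator hab hK ξ r ⟨t, hsub ht⟩ = ∫ s in a..ξ, K t s (u s) := by
      rw [truncatedOperator_apply]
      refine integral_congr fun s hs => ?_
      rw [uIcc_of_le hξ.1] at hs
      simp only [hr (hsub hs)]
    have h := h t ht
    rw [IccExtend_of_mem hab _ (hsub ht)] at h
    rw [hr (hsub ht), IccExtend_of_mem hab _ (hsub ht), ContinuousMap.add_apply, hTr, ← h]
    abel
  have hres : truncatedResolvent hab hK ξ y = v := inverse_one_sub_apply_eq hunit <| by
    rw [truncatedOperator_congr hab hK hξ hv]
    exact add_sub_cancel_right _ _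
  rw [hres]
  exact fun t ht => (hv ht).trans (hr (hsub ht))

lemma truncatedResolvent_const_apply (hξ : ξ ∈ Icc a b)
    (hunit : IsUnit (1 - truncatedOperator hab hK ξ)) {G : ℝ → E →L[ℝ] E} (hGcont : Continuous G)
    (hG : ∀ t ∈ Icc a ξ, G t - ∫ s in a..ξ, K t s * G s = 1) (x : E) {t : ℝ}
    (ht : t ∈ Icc a ξ) : IccExtend hab (truncatedResolvent hab hK ξ (.const _ x)) t = G t x := by
  refine truncatedResolvent_eqOn hab hξ hunit (u := fun t => G t x) (by fun_prop)
    (fun t ht => ?_) ht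
  have happly : (∫ s in a..ξ, K t s * G s) x = ∫ s in a..ξ, K t s (G s x) :=
    ContinuousLinearMap.intervalIntegral_apply (φ := fun s => K t s * G s)
      (Continuous.intervalIntegrable (by fun_prop) _ _) x
  rw [← happly, ← _root_.sub_apply, hG t ht]
  rfl

lemma integral_truncatedResolvent (hξ : ξ ∈ Icc a b)
    (hunit : IsUnit (1 - truncatedOperator hab hK ξ)) {G : ℝ → E →L[ℝ] E} (hGcont : Continuous G)
    (hG : ∀ s ∈ Icc a ξ, G s - ∫ t in a..ξ, G t * K t s = 1) (y : C(Icc a b, E)) :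
    ∫ s in a..ξ, IccExtend hab (truncatedResolvent hab hK ξ y) s
      = ∫ s in a..ξ, G s (IccExtend hab y s) := by
  rw [← uIcc_of_le hξ.1] at hG
  rw [← integral_adjoint_apply_sub_integral hK hGcont hG
    (truncatedResolvent hab hK ξ y).continuous.Icc_extend']
  refine integral_congr fun t ht => ?_
  rw [uIcc_of_le hξ.1] at ht
  simp only [truncatedResolvent_apply_sub_integral hab hunit y ⟨ht.1, ht.2.trans hξ.2⟩]

lemma hasDerivAt_truncatedResolvent (hunit : IsUnit (1 - truncatedOperator hab hK ξ))
    {y : ℝ → C(Icc a b, E)} {y' : C(Icc a b, E)} (hy : HasDerivAt y y' ξ) :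
    HasDerivAt (fun η => truncatedResolvent hab hK η (y η))
      (truncatedResolvent hab hK ξ
        (kernelOperator hab hK ξ (truncatedResolvent hab hK ξ (y ξ)) + y')) ξ :=
  hasDerivAt_inverse_one_sub_strongIntegral _ hunit hy

lemma hasDerivAt_integral_truncatedResolvent (hξ : ξ ∈ Icc a b)
    (hunit : IsUnit (1 - truncatedOperator hab hK ξ)) {G : ℝ → E →L[ℝ] E} (hGcont : Continuous G)
    (hG : ∀ s ∈ Icc a ξ, G s - ∫ t in a..ξ, G t * K t s = 1) (y : C(Icc a b, E)) :
    HasDerivAt (fun η => ∫ s in a..η, IccExtend hab (truncatedResolvent hab hK η y) s)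
      (G ξ (IccExtend hab (truncatedResolvent hab hK ξ y) ξ)) ξ := by
  set x := IccExtend hab (truncatedResolvent hab hK ξ y) ξ
  have hderiv := hasDerivAt_strongIntegral_apply_of_hasDerivAt
    (A := fun s => ContinuousMap.evalCLM ℝ (projIcc a b hab s))
    (fun v => v.continuous.Icc_extend') a
    (hasDerivAt_truncatedResolvent hab hunit (hasDerivAt_const ξ y))
  rw [add_zero] at hderiv
  have hGK : ∫ s in a..ξ, G s (IccExtend hab (kernelOperator hab hK ξ
      (truncatedResolvent hab hK ξ y)) s) = (∫ s in a..ξ, G s * K s ξ) x := by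
    rw [ContinuousLinearMap.intervalIntegral_apply
      (Continuous.intervalIntegrable (by fun_prop) _ _)]
    refine integral_congr fun s hs => ?_
    rw [uIcc_of_le hξ.1] at hs
    simp only [IccExtend_of_mem hab _ ⟨hs.1, hs.2.trans hξ.2⟩]
    rfl
  refine hderiv.congr_deriv (Eq.symm ?_)
  calc G ξ x = x + (∫ s in a..ξ, G s * K s ξ) x := by
        nth_rewrite 1 [eq_add_of_sub_eq (hG ξ (right_mem_Icc.2 hξ.1))]
        rfl
    _ = x + ∫ s in a..ξ, IccExtend hab (truncatedResolvent hab hK ξ (kernelOperator hab hK ξ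
          (truncatedResolvent hab hK ξ y))) s := by
        rw [integral_truncatedResolvent hab hξ hunit hGcont hG, hGK]

lemma hasDerivAt_integral_adjoint_apply
    (hunit : ∀ ξ ∈ Ioo a b, IsUnit (1 - truncatedOperator hab hK ξ)) {gs : ℝ → ℝ → E →L[ℝ] E}
    (hgscont : Continuous fun p : ℝ × ℝ => gs p.1 p.2)
    (hgs : ∀ ξ ∈ Ioo a b, ∀ s ∈ Icc a ξ, gs s ξ - ∫ t in a..ξ, gs t ξ * K t s = 1)
    (hξ : ξ ∈ Ioo a b) (y : C(Icc a b, E)) :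
    HasDerivAt (fun η => ∫ s in a..η, gs s η (IccExtend hab y s))
      (gs ξ ξ (IccExtend hab (truncatedResolvent hab hK ξ y) ξ)) ξ := by
  have hcont (η : ℝ) : Continuous fun s => gs s η := by fun_prop
  refine (hasDerivAt_integral_truncatedResolvent hab (Ioo_subset_Icc_self hξ) (hunit ξ hξ)
    (hcont ξ) (hgs ξ hξ) y).congr_of_eventuallyEq ?_
  filter_upwards [Ioo_mem_nhds hξ.1 hξ.2] with η hη
  exact (integral_truncatedResolvent hab (Ioo_subset_Icc_self hη) (hunit η hη)
    (hcont η) (hgs η hη) y).symm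

lemma hasDerivAt_truncatedResolvent_sub_const (hunit : IsUnit (1 - truncatedOperator hab hK ξ))
    {y : C(Icc a b, E)} {c : ℝ → E} {c' : E} (hc : HasDerivAt c c' ξ)
    (hzero : IccExtend hab (truncatedResolvent hab hK ξ (y - .const _ (c ξ))) ξ = 0) :
    HasDerivAt (fun η => truncatedResolvent hab hK η (y - .const _ (c η)))
      (-truncatedResolvent hab hK ξ (.const _ c')) ξ := by
  have hconst : HasDerivAt (fun η => ContinuousMap.const (Icc a b) (c η)) (.const _ c') ξ :=
    (ContinuousLinearMap.const ℝ (Icc a b) : E →L[ℝ] C(Icc a b, E)).hasFDerivAt.comp_hasDerivAt ξ hc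
  have hkernel : kernelOperator hab hK ξ
      (truncatedResolvent hab hK ξ (y - .const _ (c ξ))) = 0 := by
    ext t
    rw [kernelOperator_apply, hzero, map_zero, ContinuousMap.zero_apply]
  have hderiv := hasDerivAt_truncatedResolvent hab hunit (hconst.const_sub y)
  rwa [hkernel, zero_add, map_neg] at hderiv

lemma truncatedResolvent_sub_const_apply (hξ : ξ ∈ Icc a b)
    (hunit : IsUnit (1 - truncatedOperator hab hK ξ)) {G : ℝ → E →L[ℝ] E} (hGcont : Continuous G)
    (hG : ∀ t ∈ Icc a ξ, G t - ∫ s in a..ξ, K t s * G s = 1) (y : C(Icc a b, E)) (x : E)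
    {t : ℝ} (ht : t ∈ Icc a ξ) :
    IccExtend hab (truncatedResolvent hab hK ξ (y - .const _ x)) t
      = IccExtend hab (truncatedResolvent hab hK ξ y) t - G t x := by
  rw [map_sub, ← truncatedResolvent_const_apply hab hξ hunit hGcont hG x ht]
  rfl

lemma continuousAt_truncatedResolvent_sub_const (hunit : IsUnit (1 - truncatedOperator hab hK ξ))
    (y : C(Icc a b, E)) {c : ℝ → E} (hc : ContinuousAt c ξ) :
    ContinuousAt (fun η => truncatedResolvent hab hK η (y - .const _ (c η))) ξ :=
  (continuousAt_inverse_one_sub_strongIntegral _ hunit).clm_apply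
    (continuousAt_const.sub (ContinuousMap.continuous_const'.continuousAt.comp hc))

lemma truncatedResolvent_sub_const_apply_right
    (hunit : ∀ ξ ∈ Ioc a b, IsUnit (1 - truncatedOperator hab hK ξ)) {g : ℝ → ℝ → E →L[ℝ] E}
    (hgcont : Continuous fun p : ℝ × ℝ => g p.1 p.2)
    (hg : ∀ ξ ∈ Ioo a b, ∀ t ∈ Icc a ξ, g t ξ - ∫ s in a..ξ, K t s * g s ξ = 1)
    {c c' : ℝ → E} (hc : ∀ ξ ∈ Ioc a b, HasDerivAt c (c' ξ) ξ) (hc'cont : Continuous c')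
    {y : C(Icc a b, E)}
    (hzero : ∀ ξ ∈ Ioo a b,
      IccExtend hab (truncatedResolvent hab hK ξ (y - .const _ (c ξ))) ξ = 0)
    {t : ℝ} (ht : t ∈ Ioo a b) :
    IccExtend hab (truncatedResolvent hab hK b (y - .const _ (c b))) t
      = -∫ ξ in t..b, g t ξ (c' ξ) := by
  let q (ξ : ℝ) : C(Icc a b, E) := truncatedResolvent hab hK ξ (y - .const _ (c ξ))
  have hcont : ContinuousOn (fun ξ => IccExtend hab (q ξ) t) (Icc t b) := fun ξ hξ => by
    have hξ' : ξ ∈ Ioc a b := ⟨ht.1.trans_le hξ.1, hξ.2⟩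
    exact ((continuous_eval_const (projIcc a b hab t)).continuousAt.comp
      (continuousAt_truncatedResolvent_sub_const hab (hunit ξ hξ') y
        (hc ξ hξ').continuousAt)).continuousWithinAt
  have hderiv : ∀ ξ ∈ Ioo t b,
      HasDerivAt (fun η => IccExtend hab (q η) t) (-g t ξ (c' ξ)) ξ := fun ξ hξ => by
    have hξ' : ξ ∈ Ioo a b := ⟨ht.1.trans hξ.1, hξ.2⟩
    have hξu := hunit ξ (Ioo_subset_Ioc_self hξ')
    rw [← truncatedResolvent_const_apply (G := fun s => g s ξ) hab (Ioo_subset_Icc_self hξ') hξu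
      (by fun_prop) (hg ξ hξ') _ ⟨ht.1.le, hξ.1.le⟩]
    exact (ContinuousMap.evalCLM ℝ (projIcc a b hab t)).hasFDerivAt.comp_hasDerivAt ξ
      (hasDerivAt_truncatedResolvent_sub_const hab hξu (hc ξ (Ioo_subset_Ioc_self hξ'))
        (hzero ξ hξ'))
  have hftc := integral_eq_sub_of_hasDerivAt_of_le ht.2.le hcont hderiv
    (Continuous.intervalIntegrable (by fun_prop) _ _)
  rwa [intervalIntegral.integral_neg, hzero t ht, sub_zero, eq_comm] at hftc

lemma truncatedResolvent_apply_right_of_apply_diag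
    (hunit : ∀ ξ ∈ Ioc a b, IsUnit (1 - truncatedOperator hab hK ξ)) {g : ℝ → ℝ → E →L[ℝ] E}
    (hgcont : Continuous fun p : ℝ × ℝ => g p.1 p.2)
    (hg : ∀ ξ ∈ Ioc a b, ∀ t ∈ Icc a ξ, g t ξ - ∫ s in a..ξ, K t s * g s ξ = 1)
    {c c' : ℝ → E} (hc : ∀ ξ ∈ Ioc a b, HasDerivAt c (c' ξ) ξ) (hc'cont : Continuous c')
    {y : C(Icc a b, E)}
    (hdiag : ∀ ξ ∈ Ioo a b, IccExtend hab (truncatedResolvent hab hK ξ y) ξ = g ξ ξ (c ξ))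
    {t : ℝ} (ht : t ∈ Ioo a b) :
    IccExtend hab (truncatedResolvent hab hK b y) t
      = g t b (c b) - ∫ ξ in t..b, g t ξ (c' ξ) := by
  have hsub {ξ s : ℝ} (hξ : ξ ∈ Ioc a b) (hs : s ∈ Icc a ξ) :
      IccExtend hab (truncatedResolvent hab hK ξ (y - .const _ (c ξ))) s
        = IccExtend hab (truncatedResolvent hab hK ξ y) s - g s ξ (c ξ) :=
    truncatedResolvent_sub_const_apply hab (Ioc_subset_Icc_self hξ) (hunit ξ hξ)
      (G := fun s => g s ξ) (by fun_prop) (hg ξ hξ) y (c ξ) hs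
  have hzero : ∀ ξ ∈ Ioo a b,
      IccExtend hab (truncatedResolvent hab hK ξ (y - .const _ (c ξ))) ξ = 0 := fun ξ hξ => by
    rw [hsub (Ioo_subset_Ioc_self hξ) (right_mem_Icc.2 hξ.1.le), hdiag ξ hξ, sub_self]
  have hright := truncatedResolvent_sub_const_apply_right hab hunit hgcont
    (fun ξ hξ => hg ξ (Ioo_subset_Ioc_self hξ)) hc hc'cont hzero ht
  rw [hsub (right_mem_Ioc.2 (ht.1.trans ht.2)) (Ioo_subset_Icc_self ht)] at hright
  rw [sub_eq_add_neg, ← hright, add_sub_cancel]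

end Truncated

section Compactness

open MeasureTheory Metric

lemma isCompactOperator_strongIntegral {X Y : Type*} [NormedAddCommGroup X] [NormedSpace ℝ X]
    [NormedAddCommGroup Y] [NormedSpace ℝ Y] [CompleteSpace X] [CompleteSpace Y]
    {A : ℝ → X →L[ℝ] Y} (hA : ∀ v, Continuous fun s => A s v) {a η : ℝ} (hη : a ≠ η) {S : Set Y}
    (hS : IsCompact S) (hAS : ∀ s ∈ uIoc a η, ∀ v ∈ closedBall 0 1, A s v ∈ S) :
    IsCompactOperator (strongIntegral hA a η) := by
  have hhull : IsCompact (closure (convexHull ℝ S)) :=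
    isCompact_iff_totallyBounded_isComplete.2
      ⟨hS.totallyBounded.convexHull.closure, isClosed_closure.isComplete⟩
  rw [isCompactOperator_iff_exists_mem_nhds_image_subset_compact]
  refine ⟨closedBall 0 1, closedBall_mem_nhds _ one_pos, _, hhull.smul (η - a), ?_⟩
  rintro _ ⟨v, hv, rfl⟩
  have havg : ⨍ s in a..η, A s v ∈ closure (convexHull ℝ S) := by
    refine (convex_convexHull ℝ S).closure.set_average_mem isClosed_closure ?_ ?_ ?_
      (((hA v).intervalIntegrable _ _).def')
    · rw [uIoc, Real.volume_Ioc, ENNReal.ofReal_ne_zero_iff]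
      simpa using hη.symm
    · simp [uIoc]
    · filter_upwards [ae_restrict_mem measurableSet_uIoc] with s hs
      exact subset_closure (subset_convexHull ℝ S (hAS s hs v hv))
  refine ⟨_, havg, ?_⟩
  simp only [interval_average_eq, smul_inv_smul₀ (sub_ne_zero.2 hη.symm), strongIntegral_apply]

lemma isUnit_one_sub_truncatedOperator {E : Type*} [NormedAddCommGroup E] [NormedSpace ℝ E]
    [ProperSpace E] {K : ℝ → ℝ → E →L[ℝ] E} {a b ξ : ℝ} (hab : a ≤ b)
    (hK : Continuous fun p : ℝ × ℝ => K p.1 p.2) (hξ : ξ ∈ Ioc a b)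
    (huniq : ∀ v : ℝ → E, Continuous v → (∀ t ∈ Icc a ξ, v t = ∫ s in a..ξ, K t s (v s)) →
      ∀ t ∈ Icc a ξ, v t = 0) :
    IsUnit (1 - truncatedOperator hab hK ξ) := by
  have hinj : ∀ v, truncatedOperator hab hK ξ v = v → v = 0 := fun v hv => by
    rw [← hv, ← map_zero (truncatedOperator hab hK ξ)]
    refine truncatedOperator_congr hab hK (Ioc_subset_Icc_self hξ)
      (huniq _ v.continuous.Icc_extend' fun t ht => ?_)
    have ht' : t ∈ Icc a b := ⟨ht.1, ht.2.trans hξ.2⟩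
    rw [← truncatedOperator_apply hab hK v ⟨t, ht'⟩, hv, IccExtend_of_mem hab _ ht']
  have hcompact : IsCompactOperator (truncatedOperator hab hK ξ) := by
    refine isCompactOperator_strongIntegral _ hξ.1.ne
      (((isCompact_Icc (a := a) (b := ξ)).prod (isCompact_closedBall (0 : E) 1)).image
        (kernelSection a b hK).continuous) fun s hs v hv => ?_
    rw [uIoc_of_le hξ.1.le] at hs
    rw [mem_closedBall_zero_iff] at hv
    refine ⟨(s, IccExtend hab v s), ⟨Ioc_subset_Icc_self hs, ?_⟩, rfl⟩
    exact mem_closedBall_zero_iff.2 ((v.norm_coe_le_norm _).trans hv)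
  rcases hcompact.hasEigenvalue_or_mem_resolventSet (one_ne_zero (α := ℝ)) with heigen | hresolvent
  · obtain ⟨v, hv⟩ := heigen.exists_hasEigenvector
    exact absurd (hinj v (by simpa using hv.apply_eq_smul)) hv.2
  · simpa [spectrum.mem_resolventSet_iff] using hresolvent

end Compactness

section MatrixKernel

open MeasureTheory

variable (ι 𝕜 : Type*) [Fintype ι] [RCLike 𝕜]

/-- The action of matrices on vectors as a continuous bilinear map. The scalars are restricted to
`ℝ`, the field over which the operator-valued development takes place. -/
noncomputable def mulVecCLM : Matrix ι ι 𝕜 →L[ℝ] (ι → 𝕜) →L[ℝ] ι → 𝕜 :=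
  (Matrix.mulVecBilin ℝ ℝ).toContinuousBilinearMap

variable {ι 𝕜}

lemma mulVecCLM_integral {a b : ℝ} {A : ℝ → Matrix ι ι 𝕜} (hA : Continuous A) :
    mulVecCLM ι 𝕜 (∫ s in a..b, A s) = ∫ s in a..b, mulVecCLM ι 𝕜 (A s) := by
  refine ContinuousLinearMap.ext fun v => ?_
  rw [ContinuousLinearMap.intervalIntegral_apply
    (((mulVecCLM ι 𝕜).continuous.comp hA).intervalIntegrable _ _)]
  exact (((mulVecCLM ι 𝕜).flip v).intervalIntegral_comp_comm (hA.intervalIntegrable _ _)).symm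

variable [DecidableEq ι]

lemma mulVecCLM_sub_integral_mul_eq_one {a b : ℝ} {G : Matrix ι ι 𝕜} {A B : ℝ → Matrix ι ι 𝕜}
    (hA : Continuous A) (hB : Continuous B) (h : G - ∫ s in a..b, A s * B s = 1) :
    mulVecCLM ι 𝕜 G - ∫ s in a..b, mulVecCLM ι 𝕜 (A s) * mulVecCLM ι 𝕜 (B s) = 1 := by
  have hmul (s : ℝ) : mulVecCLM ι 𝕜 (A s) * mulVecCLM ι 𝕜 (B s) = mulVecCLM ι 𝕜 (A s * B s) :=
    ContinuousLinearMap.ext fun v => Matrix.mulVec_mulVec v _ _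
  have hone : mulVecCLM ι 𝕜 1 = 1 := ContinuousLinearMap.ext Matrix.one_mulVec
  simp only [hmul]
  rw [← mulVecCLM_integral (hA.matrix_mul hB), ← map_sub, h, hone]

lemma eq_zero_of_forall_eq_integral_mulVec {K : ℝ → ℝ → Matrix ι ι 𝕜}
    (hK : Continuous fun p : ℝ × ℝ => K p.1 p.2) {a ξ : ℝ} {G : ℝ → Matrix ι ι 𝕜}
    (hGcont : Continuous G) (hG : ∀ t ∈ Icc a ξ, G t - ∫ s in a..ξ, K t s * G s = 1)
    (huniq : ∀ H : ℝ → Matrix ι ι 𝕜, ContinuousOn H (Icc a ξ) →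
      (∀ t ∈ Icc a ξ, H t - ∫ s in a..ξ, K t s * H s = 1) → ∀ t ∈ Icc a ξ, H t = G t)
    {v : ℝ → ι → 𝕜} (hv : Continuous v)
    (hvK : ∀ t ∈ Icc a ξ, v t = ∫ s in a..ξ, K t s *ᵥ v s) {t : ℝ} (ht : t ∈ Icc a ξ) :
    v t = 0 := by
  let col (t : ℝ) : Matrix ι ι 𝕜 := replicateCol ι (v t)
  have hcol : Continuous col := hv.matrix_replicateCol
  have hKc (t : ℝ) : Continuous (K t) := hK.comp (.prodMk_right t)
  have hcolK : ∀ t ∈ Icc a ξ, ∫ s in a..ξ, K t s * col s = col t := fun t ht => by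
    let L : (ι → 𝕜) →L[ℝ] Matrix ι ι 𝕜 := ⟨⟨⟨replicateCol ι, fun _ _ => rfl⟩, fun _ _ => rfl⟩,
      continuous_id.matrix_replicateCol⟩
    have hcomm := L.intervalIntegral_comp_comm
      (((hKc t).matrix_mulVec hv).intervalIntegrable (μ := volume) a ξ)
    rw [← hvK t ht] at hcomm
    exact hcomm
  have hsum := huniq (fun t => G t + col t) (hGcont.add hcol).continuousOn (fun t ht => by
    simp only [mul_add]
    rw [intervalIntegral.integral_add (((hKc t).matrix_mul hGcont).intervalIntegrable _ _)
      (((hKc t).matrix_mul hcol).intervalIntegrable _ _), hcolK t ht, ← hG t ht]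
    abel) t ht
  ext i
  exact congrFun₂ (add_eq_left.1 hsum) i i

end MatrixKernel

theorem krein_formula_of_isUnit_one_sub_truncatedOperator {E : Type*} [NormedAddCommGroup E]
    [NormedSpace ℝ E] [CompleteSpace E] {a b : ℝ} (hab : a < b) {K : ℝ → ℝ → E →L[ℝ] E}
    (hK : Continuous fun p : ℝ × ℝ => K p.1 p.2)
    (hunit : ∀ ξ ∈ Ioc a b, IsUnit (1 - truncatedOperator hab.le hK ξ))
    {f : ℝ → E} (hf : Continuous f) {g gs : ℝ → ℝ → E →L[ℝ] E}
    (hgcont : Continuous fun p : ℝ × ℝ => g p.1 p.2)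
    (hgscont : Continuous fun p : ℝ × ℝ => gs p.1 p.2)
    (hg : ∀ ξ ∈ Ioc a b, ∀ t ∈ Icc a ξ, g t ξ - ∫ s in a..ξ, K t s * g s ξ = 1)
    (hgs : ∀ ξ ∈ Ioo a b, ∀ t ∈ Icc a ξ, gs t ξ - ∫ s in a..ξ, gs s ξ * K s t = 1)
    (hinj : ∀ ξ ∈ Ioo a b, Function.Injective (gs ξ ξ)) {c c' : ℝ → E}
    (hD : ∀ ξ ∈ Ioo a b,
      HasDerivAt (fun η => ∫ s in a..η, gs s η (f s)) (gs ξ ξ (g ξ ξ (c ξ))) ξ)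
    (hc : ∀ ξ ∈ Ioc a b, HasDerivAt c (c' ξ) ξ) (hc'cont : Continuous c')
    {φ : ℝ → E} (hφcont : Continuous φ)
    (hφ : ∀ t ∈ Icc a b, φ t - ∫ s in a..b, K t s (φ s) = f t) :
    ∀ t ∈ Icc a b, φ t = g t b (c b) - ∫ ξ in t..b, g t ξ (c' ξ) := by
  let y : C(Icc a b, E) := ⟨fun t => f t, by fun_prop⟩
  have hy {t : ℝ} (ht : t ∈ Icc a b) : IccExtend hab.le y t = f t := IccExtend_of_mem _ _ ht
  have hφy : EqOn (IccExtend hab.le (truncatedResolvent hab.le hK b y)) φ (Icc a b) :=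
    truncatedResolvent_eqOn hab.le (right_mem_Icc.2 hab.le) (hunit b (right_mem_Ioc.2 hab)) hφcont
      fun t ht => (hφ t ht).trans (hy ht).symm
  have hdiag : ∀ ξ ∈ Ioo a b,
      IccExtend hab.le (truncatedResolvent hab.le hK ξ y) ξ = g ξ ξ (c ξ) := fun ξ hξ => by
    refine hinj ξ hξ ((hasDerivAt_integral_adjoint_apply hab.le
      (fun η hη => hunit η (Ioo_subset_Ioc_self hη)) hgscont hgs hξ y).unique
        ((hD ξ hξ).congr_of_eventuallyEq ?_))
    filter_upwards [Ioo_mem_nhds hξ.1 hξ.2] with η hη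
    refine integral_congr fun s hs => ?_
    rw [uIcc_of_le hη.1.le] at hs
    simp only [hy ⟨hs.1, hs.2.trans hη.2.le⟩]
  have hinterior : EqOn φ (fun t => g t b (c b) - ∫ ξ in t..b, g t ξ (c' ξ)) (Ioo a b) :=
    fun t ht => (hφy (Ioo_subset_Icc_self ht)).symm.trans <|
      truncatedResolvent_apply_right_of_apply_diag hab.le hunit hgcont hg hc hc'cont hdiag ht
  rw [← closure_Ioo hab.ne]
  refine hinterior.closure hφcont (.sub (by fun_prop) ?_)
  exact continuous_integral_right_clm_apply hgcont hc'cont b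

theorem krein_formula_general {ι 𝕜 : Type*} [Fintype ι] [DecidableEq ι] [RCLike 𝕜] {a b : ℝ}
    (hab : a < b) {K : ℝ → ℝ → Matrix ι ι 𝕜} (hK : Continuous fun p : ℝ × ℝ => K p.1 p.2)
    {f : ℝ → ι → 𝕜} (hf : Continuous f) {g gs : ℝ → ℝ → Matrix ι ι 𝕜}
    (hgcont : Continuous fun p : ℝ × ℝ => g p.1 p.2)
    (hgscont : Continuous fun p : ℝ × ℝ => gs p.1 p.2)
    (hg : ∀ ξ ∈ Ioc a b, ∀ t ∈ Icc a ξ, g t ξ - ∫ s in a..ξ, K t s * g s ξ = 1)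
    (hgs : ∀ ξ ∈ Ioc a b, ∀ t ∈ Icc a ξ, gs t ξ - ∫ s in a..ξ, gs s ξ * K s t = 1)
    (hguniq : ∀ ξ ∈ Ioc a b, ∀ h : ℝ → Matrix ι ι 𝕜, ContinuousOn h (Icc a ξ) →
      (∀ t ∈ Icc a ξ, h t - ∫ s in a..ξ, K t s * h s = 1) → ∀ t ∈ Icc a ξ, h t = g t ξ)
    (hdet : ∀ ξ ∈ Ioc a b, (gs ξ ξ * g ξ ξ).det ≠ 0) {D : ℝ → ι → 𝕜}
    (hD : ∀ ξ ∈ Ioc a b, HasDerivAt (fun η => ∫ s in a..η, gs s η *ᵥ f s) (D ξ) ξ)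
    {F' : ℝ → ι → 𝕜} (hF'cont : Continuous F')
    (hF' : ∀ ξ ∈ Ioc a b, HasDerivAt (fun η => (gs η η * g η η)⁻¹ *ᵥ D η) (F' ξ) ξ)
    {φ : ℝ → ι → 𝕜} (hφcont : Continuous φ)
    (hφ : ∀ t ∈ Icc a b, φ t - ∫ s in a..b, K t s *ᵥ φ s = f t) :
    ∀ t ∈ Icc a b,
      φ t = g t b *ᵥ ((gs b b * g b b)⁻¹ *ᵥ D b) - ∫ ξ in t..b, g t ξ *ᵥ F' ξ := by
  let L := mulVecCLM ι 𝕜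
  have hg_left (ξ : ℝ) : Continuous fun t => g t ξ := hgcont.comp (.prodMk_left ξ)
  have hgs_left (ξ : ℝ) : Continuous fun t => gs t ξ := hgscont.comp (.prodMk_left ξ)
  refine krein_formula_of_isUnit_one_sub_truncatedOperator hab (K := fun t s => L (K t s))
    (g := fun t ξ => L (g t ξ)) (gs := fun t ξ => L (gs t ξ)) (L.continuous.comp hK)
    (fun ξ hξ => ?unit) hf (L.continuous.comp hgcont) (L.continuous.comp hgscont)
    (fun ξ hξ t ht => ?g) (fun ξ hξ t ht => ?gs) (fun ξ hξ => ?inj) (fun ξ hξ => ?deriv)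
    hF' hF'cont hφcont hφ
  case unit =>
    exact isUnit_one_sub_truncatedOperator hab.le _ hξ fun v hv hvK t =>
      eq_zero_of_forall_eq_integral_mulVec hK (hg_left ξ) (hg ξ hξ) (hguniq ξ hξ) hv hvK
  case g =>
    exact mulVecCLM_sub_integral_mul_eq_one (hK.comp (.prodMk_right t)) (hg_left ξ) (hg ξ hξ t ht)
  case gs =>
    exact mulVecCLM_sub_integral_mul_eq_one (hgs_left ξ) (hK.comp (.prodMk_left t))
      (hgs ξ (Ioo_subset_Ioc_self hξ) t ht)
  case inj =>
    have hM := (isUnit_iff_isUnit_det _).2 (hdet ξ (Ioo_subset_Ioc_self hξ)).isUnit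
    exact mulVec_injective_of_isUnit (isUnit_of_mul_isUnit_left hM)
  case deriv =>
    have hξ' := Ioo_subset_Ioc_self hξ
    refine (hD ξ hξ').congr_deriv ?_
    change D ξ = gs ξ ξ *ᵥ (g ξ ξ *ᵥ ((gs ξ ξ * g ξ ξ)⁻¹ *ᵥ D ξ))
    rw [mulVec_mulVec, mulVec_mulVec, mul_nonsing_inv _ (hdet ξ hξ').isUnit, one_mulVec]

/-- Krein's formula, matrix case, Theorem 3.1:
if the truncated equations have unique continuous solutions g, g* with
det[g*(ξ,ξ)g(ξ,ξ)] ≠ 0, then the unique solution φ of the full system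
φ(t) − ∫_a^b K(t,s)φ(s) ds = f(t) is given by
φ(t) = g(t,b)[M'(b)]⁻¹ D(b) − ∫_t^b g(t,ξ) (d/dξ)[(M'(ξ))⁻¹ D(ξ)] dξ,
where M'(ξ) = g*(ξ,ξ)g(ξ,ξ) and D(ξ) = d/dξ ∫_a^ξ g*(s,ξ)f(s) ds. -/
theorem krein_formula (n : ℕ) (a b : ℝ) (hab : a < b)
    (K : ℝ → ℝ → Matrix (Fin n) (Fin n) ℂ)
    (hK : Continuous fun p : ℝ × ℝ => K p.1 p.2)
    (f : ℝ → Fin n → ℂ) (hf : Continuous f)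
    (g gs : ℝ → ℝ → Matrix (Fin n) (Fin n) ℂ)
    -- g and g* solve the truncated equations with identity right-hand side
    (hgcont : Continuous fun p : ℝ × ℝ => g p.1 p.2)
    (hgscont : Continuous fun p : ℝ × ℝ => gs p.1 p.2)
    (hg : ∀ ξ ∈ Ioc a b, ∀ t ∈ Icc a ξ,
      g t ξ - ∫ s in a..ξ, K t s * g s ξ = 1)
    (hgs : ∀ ξ ∈ Ioc a b, ∀ t ∈ Icc a ξ,
      gs t ξ - ∫ s in a..ξ, gs s ξ * K s t = 1)
    -- uniqueness of the truncated solutions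
    (hguniq : ∀ ξ ∈ Ioc a b, ∀ h : ℝ → Matrix (Fin n) (Fin n) ℂ,
      ContinuousOn h (Icc a ξ) →
      (∀ t ∈ Icc a ξ, h t - ∫ s in a..ξ, K t s * h s = 1) →
      ∀ t ∈ Icc a ξ, h t = g t ξ)
    (hgsuniq : ∀ ξ ∈ Ioc a b, ∀ h : ℝ → Matrix (Fin n) (Fin n) ℂ,
      ContinuousOn h (Icc a ξ) →
      (∀ t ∈ Icc a ξ, h t - ∫ s in a..ξ, h s * K s t = 1) →
      ∀ t ∈ Icc a ξ, h t = gs t ξ)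
    -- the nondegeneracy condition det[g*(ξ,ξ)g(ξ,ξ)] ≠ 0
    (hdet : ∀ ξ ∈ Icc a b, (gs ξ ξ * g ξ ξ).det ≠ 0)
    -- D ξ = d/dξ ∫_a^ξ g*(s,ξ) f(s) ds
    (D : ℝ → Fin n → ℂ) (hDcont : Continuous D)
    (hD : ∀ ξ ∈ Icc a b,
      HasDerivAt (fun η => ∫ s in a..η, gs s η *ᵥ f s) (D ξ) ξ)
    -- F' ξ = d/dξ [ (M'(ξ))⁻¹ D ξ ]
    (F' : ℝ → Fin n → ℂ) (hF'cont : Continuous F')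
    (hF' : ∀ ξ ∈ Icc a b,
      HasDerivAt (fun η => (gs η η * g η η)⁻¹ *ᵥ D η) (F' ξ) ξ)
    -- φ is the solution of the full system
    (φ : ℝ → Fin n → ℂ) (hφcont : Continuous φ)
    (hφ : ∀ t ∈ Icc a b, φ t - ∫ s in a..b, K t s *ᵥ φ s = f t) :
    ∀ t ∈ Icc a b,
      φ t = g t b *ᵥ ((gs b b * g b b)⁻¹ *ᵥ D b)
        - ∫ ξ in t..b, g t ξ *ᵥ F' ξ := by
  have hsub : Ioc a b ⊆ Icc a b := Ioc_subset_Icc_self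
  exact krein_formula_general hab hK hf hgcont hgscont hg hgs hguniq (fun ξ hξ => hdet ξ (hsub hξ))
    (fun ξ hξ => hD ξ (hsub hξ)) hF'cont (fun ξ hξ => hF' ξ (hsub hξ)) hφcont hφ
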